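/- Define M_{g,t}(x) := L_{g,t}(x) + Q_{g,t}(x). If g > 0, then M_{g,t}(x) = π(x;t,1)/t_h if τ ≤ e, and M_{g,t}(x) = 2·P_{ℚ(ζ_t,√g₀)}(x)/t_h if τ > e. If g < 0, then M_{g,t}(x) = π(x;2t,1)/t_h if τ ≤ e; M_{g,t}(x) = {4·P_{ℚ(ζ_{2t},√g₀)}(x) − 2·P_{ℚ(ζ_t,√g₀)}(x) + 2(π(x;t,1) − π(x;2t,1))}/t_h if τ = e+1; and M_{g,t}(x) = 2·P_{ℚ(ζ_t,√g₀)}(x)/t_h if τ > e+1. -/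

import Mathlib

/-!
With `n = gcd(2h, t)`, the two sums over `d` in `L_{g,t}` and `Q_{g,t}` combine to the sum of
`ψ_d(p)` over all `d ∣ n`, that is, to the sum of `χ(g)` over the characters `χ` mod `p` with
`χ ^ n = 1`. As `n ∣ t ∣ p - 1`, orthogonality makes this `n` if `g` is an `n`-th power mod `p` and
`0` otherwise (`sum_psi`). Hence `M_{g,t}(x)` is `n / t` times the number of primes `p ≡ 1 (mod t)`
with `g ^ ((p - 1) / n) = 1` mod `p` (`mgt_eq_sum`).

If `τ ≤ e`, then `n = gcd(h, t)` divides `h`, so `g₀ ^ h` is always an `n`-th power; if `τ > e`, then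
`n = 2 gcd(h, t)` and `2h / n` is odd, so `(g₀ ^ h) ^ ((p - 1) / n) = g₀ ^ ((p - 1) / 2)` is the
quadratic symbol of `g₀`. For `g < 0` there is a further factor `(-1) ^ ((p - 1) / n)`. It is always
`1` if `τ > e + 1`; otherwise `t / n` is odd, and it is `1` exactly when `p ≡ 1 (mod 2t)`.
The power residue condition thus depends only on whether `p ≡ 1 (mod 2t)` and on whether `g₀` is a
square mod `p`, and the formulas follow by comparing both sides prime by prime.

This uses that an odd `p` prime to `g₀` splits completely in `ℚ(ζ_m, √g₀)` iff `p ≡ 1 (mod m)` and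
`g₀` is a square mod `p` (`splits_cycQuad_iff`). For a prime `P` above `p`, complete splitting makes
the residue field `𝔽_p` and forces `p ∤ m`, because `p` ramifies in `ℚ(ζ_p)`; then `ζ_m ^ (p - 1)`
is congruent to `1` mod `P`, so equals `1`, and Euler's criterion applies to the image of `√g₀`.
Conversely, under the two conditions `ζ_m` and `√g₀` reduce into `𝔽_p` mod `P`, so every
element of the decomposition group of `P` fixes both of them and is trivial.
-/

open Polynomial Filter
open scoped Classical Pointwise

noncomputable section

/-- The reduction of a rational number mod `p`. -/
def ratRed (g : ℚ) (p : ℕ) : ZMod p := (g.num : ZMod p) * ((g.den : ℕ) : ZMod p)⁻¹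

/-- `ord_p(g) = 0`: `p` divides neither the numerator nor the denominator of `g`. -/
def OrdZero (g : ℚ) (p : ℕ) : Prop := ¬ (p : ℤ) ∣ g.num ∧ ¬ p ∣ g.den

/-- The residual index `r_g(p) = [(ℤ/pℤ)^* : ⟨g mod p⟩]`. -/
def resIndex (g : ℚ) (p : ℕ) : ℕ := (p - 1) / orderOf (ratRed g p)

/-- The decomposition `g = ± g₀ ^ h` with `g₀ > 0` not an exact power of a rational,
`h ≥ 1`, for `g ∈ ℚ ∖ {-1,0,1}`. -/
structure Decomp (g g₀ : ℚ) (h : ℕ) : Prop where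
  ne_neg_one : g ≠ -1
  ne_zero : g ≠ 0
  ne_one : g ≠ 1
  g₀_pos : 0 < g₀
  not_power : ¬ ∃ (r : ℚ) (k : ℕ), 2 ≤ k ∧ r ^ k = g₀
  h_pos : 1 ≤ h
  eq : g = g₀ ^ h ∨ g = -(g₀ ^ h)

instance (f : ℚ[X]) : NumberField (SplittingField f) where

/-- The splitting field `ℚ(ζ_m, g^{1/m})` of `X^m - g` over `ℚ`. -/
abbrev splitField (g : ℚ) (m : ℕ) : Type := SplittingField (X ^ m - C g)

/-- The quadratic field `ℚ(√g₀)`, realised as the splitting field of `X² - g₀`. -/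
abbrev quadField (g₀ : ℚ) : Type := SplittingField (X ^ 2 - C g₀)

/-- `d(g₀)`, the discriminant of the quadratic field `ℚ(√g₀)`. -/
def discQuad (g₀ : ℚ) : ℤ := NumberField.discr (quadField g₀)

/-- The field `ℚ(ζ_m, √g₀)`. -/
abbrev cycQuadField (g₀ : ℚ) (m : ℕ) : Type :=
  SplittingField ((X ^ m - 1) * (X ^ 2 - C g₀))

/-- A rational prime `p` splits completely in the number field `K`:
there are `[K:ℚ]` maximal ideals of the ring of integers above `p`. -/
def SplitsCompletely (K : Type*) [Field K] [NumberField K] (p : ℕ) : Prop :=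
  Nat.card {P : Ideal (NumberField.RingOfIntegers K) //
      P.IsMaximal ∧ (p : NumberField.RingOfIntegers K) ∈ P} = Module.finrank ℚ K

/-- The number of primes `p ≤ x` satisfying the predicate `P`. -/
def countPrimes (x : ℝ) (P : ℕ → Prop) : ℕ :=
  ((Finset.range (⌊x⌋₊ + 1)).filter fun p => p.Prime ∧ P p).card

/-- `N_{g,t}(x)`: the number of odd primes `p ≤ x` with `ord_p(g) = 0` and `r_g(p) = t`. -/
def Ngt (g : ℚ) (t : ℕ) (x : ℝ) : ℕ :=
  countPrimes x fun p => Odd p ∧ OrdZero g p ∧ resIndex g p = t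

/-- `R_{g,t}(x)`: the number of odd primes `p ≤ x` with `ord_p(g) = 0` and `t ∣ r_g(p)`. -/
def Rgt (g : ℚ) (t : ℕ) (x : ℝ) : ℕ :=
  countPrimes x fun p => Odd p ∧ OrdZero g p ∧ t ∣ resIndex g p

/-- `π(x; m, 1)`: the number of odd primes `p ≤ x` with `ord_p(g) = 0` and `p ≡ 1 (mod m)`. -/
def piCount (g : ℚ) (m : ℕ) (x : ℝ) : ℕ :=
  countPrimes x fun p => Odd p ∧ OrdZero g p ∧ p ≡ 1 [MOD m]

/-- `P_K(x)` restricted to odd primes `p` with `ord_p(g) = 0`. -/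
def PKg (g : ℚ) (K : Type*) [Field K] [NumberField K] (x : ℝ) : ℕ :=
  countPrimes x fun p => Odd p ∧ OrdZero g p ∧ SplitsCompletely K p

/-- The logarithmic integral `Li(x) = ∫₂ˣ dt / log t`. -/
def Li (x : ℝ) : ℝ := ∫ t in (2:ℝ)..x, 1 / Real.log t

/-- `ψ_d(p) = Σ_{ord χ = d} χ(g mod p)`, the sum over the complex multiplicative
characters of `(ℤ/pℤ)^*` of order exactly `d`. -/
def psiSum (g : ℚ) (p d : ℕ) : ℂ :=
  ∑ᶠ χ ∈ {χ : MulChar (ZMod p) ℂ | orderOf χ = d}, χ (ratRed g p)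

/-- The finset of odd primes `p ≤ x` with `ord_p(g) = 0` and `p ≡ 1 (mod t)`. -/
def primesTo (g : ℚ) (t : ℕ) (x : ℝ) : Finset ℕ :=
  (Finset.range (⌊x⌋₊ + 1)).filter fun p => p.Prime ∧ Odd p ∧ OrdZero g p ∧ p ≡ 1 [MOD t]

/-- The `linear' contribution `L_{g,t}(x)`. -/
def Lgt (g : ℚ) (h t : ℕ) (x : ℝ) : ℂ :=
  (1 / (t : ℂ)) * ∑ p ∈ primesTo g t x, ∑ d ∈ (Nat.gcd h t).divisors, psiSum g p d

/-- The `quadratic' contribution `Q_{g,t}(x)`. -/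
def Qgt (g : ℚ) (h t : ℕ) (x : ℝ) : ℂ :=
  (1 / (t : ℂ)) * ∑ p ∈ primesTo g t x,
    ∑ d ∈ (Nat.gcd (2 * h) t).divisors.filter (fun d => ¬ d ∣ h), psiSum g p d

/-- `M_{g,t}(x) = L_{g,t}(x) + Q_{g,t}(x)`. -/
def Mgt (g : ℚ) (h t : ℕ) (x : ℝ) : ℂ := Lgt g h t x + Qgt g h t x

/-- The weight `w_{g,t}(p)` of Theorem 1 of the paper. -/
def wgt (g g₀ : ℚ) (h t p : ℕ) : ℚ :=
  let e := padicValNat 2 h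
  let τ := padicValNat 2 t
  let ht := h / Nat.gcd h t
  let ε₁ : ℚ := if τ < e then 0 else if τ = e then -1 else 1
  if 0 < g ∧ p ≡ 1 [MOD t] ∧ Nat.gcd ((p - 1) / t) ht = 1 then
    1 + ε₁ / 2 * (1 + (-1 : ℚ) ^ ((p - 1) / 2 ^ e)) * (jacobiSym (discQuad g₀) p : ℚ)
  else if g < 0 ∧ ¬ 2 ∣ ht ∧ p ≡ 1 [MOD Nat.lcm (2 ^ (e + 1)) t] ∧
      Nat.gcd ((p - 1) / t) ht = 1 then
    1 + ε₁ * (-1 : ℚ) ^ ((p - 1) / 2 ^ (e + 1)) * (jacobiSym (discQuad g₀) p : ℚ)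
  else if g < 0 ∧ 2 ∣ ht ∧ p ≡ 1 [MOD 2 * t] ∧ Nat.gcd ((p - 1) / (2 * t)) ht = 1 then 2
  else 0

/-- `G^m = {x^m : x ∈ G}`. -/
def powSet (G : Type*) [Monoid G] (m : ℕ) : Set G := Set.range fun x : G => x ^ m

/-- `ρ`: the density `|a·G^{2h} ∩ G^t| / |G^{2h}|` in a group `G` of order `n`
(and `0` if `t ∤ n`). -/
def rhoDen (G : Type*) [Group G] (n : ℕ) (a : G) (h t : ℕ) : ℚ :=
  if t ∣ n then
    (((a • powSet G (2 * h)) ∩ powSet G t).ncard : ℚ) / ((powSet G (2 * h)).ncard : ℚ)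
  else 0

/-- `r_{g,t}(p) = t_h · ρ_{sgn g, (d(g₀)/p), t}`, computed with respect to the
generator `γ` of `(ℤ/pℤ)^*`. -/
def rgt (g g₀ : ℚ) (h t p : ℕ) (γ : (ZMod p)ˣ) : ℚ :=
  (t / Nat.gcd t h : ℕ) *
    rhoDen (ZMod p)ˣ (p - 1)
      ((if 0 < g then 1 else -1) * (if jacobiSym (discQuad g₀) p = 1 then 1 else γ ^ h)) h t

/-- The coefficients of the Dedekind zeta function of `K`: the number of ideals of
the ring of integers of `K` of absolute norm `n`. -/
def zetaCoeff (K : Type*) [Field K] [NumberField K] (n : ℕ) : ℂ :=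
  (Nat.card {I : Ideal (NumberField.RingOfIntegers K) // Ideal.absNorm I = n} : ℂ)

/-- The Riemann Hypothesis for the Dedekind zeta function `ζ_K` of a number field `K`:
any analytic continuation of the Dirichlet series `Σ_I N(I)^{-s}` off `s = 1` has all
its zeros in the critical strip on the line `Re s = 1/2`. -/
def DedekindRH (K : Type*) [Field K] [NumberField K] : Prop :=
  ∀ Z : ℂ → ℂ, (∀ s : ℂ, s ≠ 1 → AnalyticAt ℂ Z s) →
    (∀ s : ℂ, 1 < s.re → Z s = LSeries (zetaCoeff K) s) →
    ∀ s : ℂ, 0 < s.re → s.re < 1 → Z s = 0 → s.re = 1 / 2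

/-- The Ramanujan sum `c_d(m)`. -/
def ramanujanSum (d m : ℕ) : ℂ :=
  ∑ k ∈ (Finset.Icc 1 d).filter (fun k => Nat.gcd k d = 1),
    Complex.exp (2 * Real.pi * Complex.I * k * m / d)

/-- The sum `Σ_{ord χ = d} χ(γ)` over the complex characters of `G` of order exactly `d`. -/
def charOrdSum {G : Type*} [Group G] (d : ℕ) (γ : G) : ℂ :=
  ∑ᶠ χ ∈ {χ : G →* ℂˣ | orderOf χ = d}, ((χ γ : ℂˣ) : ℂ)

end

/-! ### Complete splitting in a Galois number field -/

open NumberField in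
lemma card_primes_eq (K : Type*) [Field K] [NumberField K] {p : ℕ} (hp : p.Prime) :
    Nat.card {P : Ideal (𝓞 K) // P.IsMaximal ∧ (p : 𝓞 K) ∈ P} =
      ((Ideal.span {(p : ℤ)}).primesOver (𝓞 K)).ncard := by
  rw [← Nat.card_coe_set_eq]
  have hp0 : Ideal.span {(p : ℤ)} ≠ ⊥ := by simpa using hp.ne_zero
  have hmax : (Ideal.span {(p : ℤ)}).IsMaximal :=
    ((Ideal.span_singleton_prime (by exact_mod_cast hp.ne_zero)).2
      (Nat.prime_iff_prime_int.1 hp)).isMaximal hp0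
  refine Nat.card_congr (Equiv.subtypeEquivRight fun P => ⟨?_, ?_⟩)
  · rintro ⟨hP, hmem⟩
    refine ⟨hP.isPrime, ⟨?_⟩⟩
    refine hmax.eq_of_le (Ideal.comap_ne_top _ hP.ne_top) ?_
    rw [Ideal.span_singleton_le_iff_mem, Ideal.mem_comap]
    simpa using hmem
  · rintro ⟨hP, hover⟩
    refine ⟨Ideal.IsMaximal.of_liesOver_isMaximal P (Ideal.span {(p : ℤ)}), ?_⟩
    have : (p : ℤ) ∈ P.under ℤ := by
      rw [← hover.over]; exact Ideal.mem_span_singleton_self _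
    simpa [Ideal.mem_comap] using this

open NumberField in
lemma exists_prime_over (K : Type*) [Field K] [NumberField K] {p : ℕ} (hp : p.Prime) :
    ∃ P : Ideal (𝓞 K), P.IsMaximal ∧ (p : 𝓞 K) ∈ P ∧ P.LiesOver (Ideal.span {(p : ℤ)}) := by
  have hp0 : Ideal.span {(p : ℤ)} ≠ ⊥ := by simpa using hp.ne_zero
  have hmax : (Ideal.span {(p : ℤ)}).IsMaximal :=
    ((Ideal.span_singleton_prime (by exact_mod_cast hp.ne_zero)).2
      (Nat.prime_iff_prime_int.1 hp)).isMaximal hp0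
  obtain ⟨P, hP, hover⟩ := (inferInstance : Nonempty ((Ideal.span {(p : ℤ)}).primesOver (𝓞 K)))
  refine ⟨P, Ideal.IsMaximal.of_liesOver_isMaximal P (Ideal.span {(p : ℤ)}), ?_, hover⟩
  have : (p : ℤ) ∈ P.under ℤ := by
    rw [← hover.over]; exact Ideal.mem_span_singleton_self _
  simpa [Ideal.mem_comap] using this

open NumberField in
/-- The Galois group permutes the primes above `p` transitively, so a trivial decomposition
group gives `[K : ℚ]` of them. -/
lemma splits_of_stabilizer (K : Type*) [Field K] [NumberField K] [IsGalois ℚ K] {p : ℕ}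
    (hp : p.Prime) (P : Ideal (𝓞 K)) (hP : P.IsMaximal)
    (hover : P.LiesOver (Ideal.span {(p : ℤ)}))
    (hst : ∀ σ : K ≃ₐ[ℚ] K, σ • P = P → σ = 1) : SplitsCompletely K p := by
  have hpr : (Ideal.span {(p : ℤ)}).IsPrime :=
    (Ideal.span_singleton_prime (by exact_mod_cast hp.ne_zero)).2 (Nat.prime_iff_prime_int.1 hp)
  have := hP.isPrime
  rw [SplitsCompletely, card_primes_eq K hp, ← IsGalois.card_aut_eq_finrank,
    ← Algebra.IsInvariant.orbit_eq_primesOver ℤ (𝓞 K) (K ≃ₐ[ℚ] K) (Ideal.span {(p : ℤ)}) P,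
    ← Nat.card_congr (MulAction.orbitProdStabilizerEquivGroup (K ≃ₐ[ℚ] K) P), Nat.card_prod]
  have : MulAction.stabilizer (K ≃ₐ[ℚ] K) P = ⊥ := by
    rw [eq_bot_iff]
    exact fun σ hσ => hst σ hσ
  rw [this]; simp

open NumberField in
/-- If `p` splits completely, then every prime above `p` has residue degree one and is
unramified. -/
lemma of_splits (K : Type*) [Field K] [NumberField K] [IsGalois ℚ K] {p : ℕ}
    (hp : p.Prime) (P : Ideal (𝓞 K)) (hP : P.IsMaximal)
    (hover : P.LiesOver (Ideal.span {(p : ℤ)})) (hs : SplitsCompletely K p) :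
    Ideal.absNorm P = p ∧ (p : 𝓞 K) ∉ P ^ 2 := by
  have hpr : (Ideal.span {(p : ℤ)}).IsPrime :=
    (Ideal.span_singleton_prime (by exact_mod_cast hp.ne_zero)).2 (Nat.prime_iff_prime_int.1 hp)
  have := hP.isPrime
  have key := Ideal.ncard_primesOver_mul_ramificationIdxIn_mul_inertiaDegIn
    (Ideal.span {(p : ℤ)}) (𝓞 K) (K ≃ₐ[ℚ] K)
  rw [SplitsCompletely, card_primes_eq K hp] at hs
  rw [hs, IsGalois.card_aut_eq_finrank, Ideal.ramificationIdxIn_eq_ramificationIdx _ P (K ≃ₐ[ℚ] K),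
    Ideal.inertiaDegIn_eq_inertiaDeg _ P (K ≃ₐ[ℚ] K)] at key
  have hef := Nat.eq_of_mul_eq_mul_left (Module.finrank_pos) (key.trans (mul_one _).symm)
  have he := Nat.eq_one_of_mul_eq_one_right hef
  have hf := Nat.eq_one_of_mul_eq_one_left hef
  refine ⟨by rw [← Ideal.pow_inertiaDeg p P, hf, pow_one], fun hmem => ?_⟩
  have hmap : (Ideal.span {(p : ℤ)}).map (algebraMap ℤ (𝓞 K)) = Ideal.span {(p : 𝓞 K)} := by
    rw [Ideal.map_span]; simp
  have h0 : (Ideal.span {(p : ℤ)}).map (algebraMap ℤ (𝓞 K)) ≠ ⊥ := by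
    rw [hmap]; simpa using hp.ne_zero
  have hP0 : P ≠ ⊥ := by
    rintro rfl
    rw [hmap] at h0
    apply h0
    simpa using Ideal.pow_le_self two_ne_zero hmem
  rw [Ideal.IsDedekindDomain.ramificationIdx_eq_multiplicity (Ideal.span {(p : ℤ)}) P h0] at he
  have hdvd : P ^ 2 ∣ (Ideal.span {(p : ℤ)}).map (algebraMap ℤ (𝓞 K)) := by
    rw [hmap, Ideal.dvd_span_singleton]; exact hmem
  have hfin : FiniteMultiplicity P ((Ideal.span {(p : ℤ)}).map (algebraMap ℤ (𝓞 K))) :=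
    FiniteMultiplicity.of_prime_left (Ideal.prime_of_isPrime hP0 inferInstance) h0
  have := hfin.le_multiplicity_of_pow_dvd hdvd
  omega

/-! ### Splitting in a field generated by `ζ_m` and a square root -/

/-- The `m`-th roots of unity stay distinct modulo a prime not containing `m`. -/
lemma eq_of_pow_eq_one {R : Type*} [CommRing R] [IsDomain R] (P : Ideal R) [P.IsPrime] {m : ℕ}
    (hm : (m : R) ∉ P) {x y : R} (hx : x ^ m = 1) (hy : y ^ m = 1) (hxy : x - y ∈ P) :
    x = y := by
  by_contra hne
  have hm0 : m ≠ 0 := by rintro rfl; simp at hm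
  have h1 : (∑ i ∈ Finset.range m, x ^ i * y ^ (m - 1 - i)) * (x - y) = 0 := by
    rw [(Commute.all x y).geom_sum₂_mul, hx, hy, sub_self]
  have h2 : ∑ i ∈ Finset.range m, x ^ i * y ^ (m - 1 - i) = 0 :=
    (mul_eq_zero.1 h1).resolve_right (sub_ne_zero.2 hne)
  have h3 := congrArg (Ideal.Quotient.mk P) h2
  have hq : Ideal.Quotient.mk P x = Ideal.Quotient.mk P y := Ideal.Quotient.eq.2 hxy
  simp only [map_sum, map_mul, map_pow, map_zero, hq] at h3
  rw [geom_sum₂_self] at h3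
  rcases mul_eq_zero.1 h3 with h | h
  · rw [← map_natCast (Ideal.Quotient.mk P), Ideal.Quotient.eq_zero_iff_mem] at h
    exact hm h
  · rw [← map_pow, Ideal.Quotient.eq_zero_iff_mem] at h
    have hyP : y ∈ P := Ideal.IsPrime.mem_of_pow_mem ‹_› _ h
    have : (1 : R) ∈ P := by
      rw [← hy]; exact Ideal.pow_mem_of_mem P hyP m (Nat.pos_of_ne_zero hm0)
    exact (Ideal.IsPrime.ne_top ‹P.IsPrime›) ((Ideal.eq_top_iff_one P).2 this)

/-- Ramification of `p` in `ℚ(ζ_p)`, in elementary form. With `π = ζ - 1 ∈ P` one has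
`ζ ^ i ≡ 1 + i π (mod P²)`, so `0 = ∑_{i<p} ζ ^ i ≡ p + (p (p - 1) / 2) π ≡ p (mod P²)`. -/
lemma prime_mem_sq {R : Type*} [CommRing R] [IsDomain R] (P : Ideal R) [P.IsPrime] {p : ℕ}
    (hp : p.Prime) (hodd : Odd p) (hpP : (p : R) ∈ P) {ζ : R} (hζ : IsPrimitiveRoot ζ p) :
    (p : R) ∈ P ^ 2 := by
  have := Fact.mk hp
  have hπ : ζ - 1 ∈ P := by
    have hch : CharP (R ⧸ P) p := by
      rw [CharP.charP_iff_prime_eq_zero hp, ← map_natCast (Ideal.Quotient.mk P),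
        Ideal.Quotient.eq_zero_iff_mem]
      exact hpP
    rw [← Ideal.Quotient.eq_zero_iff_mem]
    refine eq_zero_of_pow_eq_zero (n := p) ?_
    rw [map_sub, sub_pow_char, map_one, one_pow, ← map_pow, hζ.pow_eq_one, map_one, sub_self]
  set q := Ideal.Quotient.mk (P ^ 2)
  have hmul : ∀ a ∈ P, ∀ b ∈ P, q a * q b = 0 := by
    intro a ha b hb
    rw [← map_mul, Ideal.Quotient.eq_zero_iff_mem, pow_two]
    exact Ideal.mul_mem_mul ha hb
  have hpow : ∀ i : ℕ, q ζ ^ i = 1 + i * q (ζ - 1) := by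
    intro i
    induction i with
    | zero => simp
    | succ i ih =>
      have h1 : q ζ = 1 + q (ζ - 1) := by simp
      have h2 := hmul _ hπ _ hπ
      rw [pow_succ (q ζ), ih]
      push_cast
      linear_combination (i : R ⧸ P ^ 2) * h2 + (1 + i * q (ζ - 1)) * h1
  have hsum := congrArg q (hζ.geom_sum_eq_zero hp.one_lt)
  simp only [map_sum, map_pow, hpow, map_zero] at hsum
  rw [Finset.sum_add_distrib, ← Finset.sum_mul, ← Nat.cast_sum, Finset.sum_range_id] at hsum
  obtain ⟨k, rfl⟩ := hodd
  have hk : (2 * k + 1) * (2 * k + 1 - 1) / 2 = (2 * k + 1) * k := by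
    rw [Nat.add_sub_cancel, show (2 * k + 1) * (2 * k) = 2 * ((2 * k + 1) * k) by ring]
    simp
  have h0 := hmul _ hpP _ hπ
  rw [hk] at hsum
  rw [← Ideal.Quotient.eq_zero_iff_mem]
  simp only [Finset.sum_const, Finset.card_range, nsmul_eq_mul, mul_one] at hsum
  rw [map_natCast] at h0 ⊢
  push_cast at hsum h0 ⊢
  linear_combination hsum - (k : R ⧸ P ^ 2) * h0

open NumberField in
/-- The splitting criterion for `K = ℚ(ζ, s)` with `ζ` a primitive `m`-th root of unity and
`s² = N` prime to `p`; generation is expressed by `hgen`. The condition `p ∤ m` is not assumed: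
it follows from either side of the equivalence. -/
lemma splits_iff_core (K : Type*) [Field K] [NumberField K] [IsGalois ℚ K] {p : ℕ}
    (hp : p.Prime) (hodd : Odd p) {m : ℕ} (hm : 0 < m) {N : ℤ} (hN : ¬ (p : ℤ) ∣ N)
    {ζ s : 𝓞 K} (hζ : IsPrimitiveRoot ζ m) (hs : s ^ 2 = N)
    (hgen : ∀ σ : K ≃ₐ[ℚ] K, σ • ζ = ζ → σ • s = s → σ = 1) :
    SplitsCompletely K p ↔ p ≡ 1 [MOD m] ∧ IsSquare (N : ZMod p) := by
  have := Fact.mk hp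
  obtain ⟨P, hP, hpP, hover⟩ := exists_prime_over K hp
  have := hP.isPrime
  have hint : ∀ a : ℤ, (a : 𝓞 K) ∈ P ↔ (p : ℤ) ∣ a := by
    intro a
    rw [← Ideal.mem_span_singleton, hover.over, Ideal.mem_comap]; simp
  have hnat : ∀ a : ℕ, (a : 𝓞 K) ∈ P ↔ p ∣ a := by
    intro a
    have := hint a
    rw [Int.natCast_dvd_natCast] at this
    simpa using this
  let := Ideal.Quotient.field P
  have hch : CharP (𝓞 K ⧸ P) p := by
    rw [CharP.charP_iff_prime_eq_zero hp, ← map_natCast (Ideal.Quotient.mk P),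
      Ideal.Quotient.eq_zero_iff_mem]
    exact hpP
  set q := Ideal.Quotient.mk P with hq
  have hqs : q s ^ 2 = ((N : ZMod p).cast : 𝓞 K ⧸ P) := by
    rw [← map_pow, hs, map_intCast, ZMod.cast_intCast']
  have hcop : p ≡ 1 [MOD m] → ¬ p ∣ m := by
    intro hpm hdvd
    have h1 := Nat.ModEq.of_dvd hdvd hpm
    have h2 : 1 ≡ 0 [MOD p] := h1.symm.trans (Nat.modEq_zero_iff_dvd.2 dvd_rfl)
    exact hp.one_lt.not_ge (Nat.le_of_dvd one_pos (Nat.modEq_zero_iff_dvd.1 h2))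
  constructor
  · intro hsp
    obtain ⟨hnorm, hunr⟩ := of_splits K hp P hP hover hsp
    have hpm : ¬ p ∣ m := by
      rintro ⟨k, rfl⟩
      exact hunr (prime_mem_sq P hp hodd hpP (hζ.pow hm (mul_comm p k)))
    have hcard : Nat.card (𝓞 K ⧸ P) = p := by
      rw [← hnorm]; rfl
    have hfin : Finite (𝓞 K ⧸ P) := Nat.finite_of_card_ne_zero (by rw [hcard]; exact hp.ne_zero)
    have hfer : ∀ x : 𝓞 K ⧸ P, x ≠ 0 → x ^ (p - 1) = 1 := by
      intro x hx
      have := Fintype.ofFinite (𝓞 K ⧸ P)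
      have := FiniteField.pow_card_sub_one_eq_one x hx
      rwa [← Nat.card_eq_fintype_card, hcard] at this
    constructor
    · have h1 : ζ ^ (p - 1) = 1 := by
        refine eq_of_pow_eq_one P (m := m) (by rwa [hnat]) ?_ (one_pow _) ?_
        · rw [← pow_mul, mul_comm, pow_mul, hζ.pow_eq_one, one_pow]
        · rw [← Ideal.Quotient.eq_zero_iff_mem, map_sub, map_pow, hfer, map_one, sub_self]
          intro h0
          have := congrArg q hζ.pow_eq_one
          rw [map_pow, h0, zero_pow hm.ne', map_one] at this
          exact zero_ne_one this
      exact ((Nat.modEq_iff_dvd' hp.one_lt.le).2 (hζ.dvd_of_pow_eq_one _ h1)).symm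
    · have hN0 : (N : ZMod p) ≠ 0 := by
        rwa [Ne, ZMod.intCast_zmod_eq_zero_iff_dvd]
      rw [ZMod.euler_criterion p hN0]
      apply (ZMod.castHom (dvd_refl p) (𝓞 K ⧸ P)).injective
      rw [map_pow, map_one, ZMod.castHom_apply, ← hqs, ← pow_mul,
        show 2 * (p / 2) = p - 1 by have := Nat.two_mul_div_two_add_one_of_odd hodd; omega]
      apply hfer
      intro h0
      rw [h0, zero_pow two_ne_zero] at hqs
      apply hN0
      apply (ZMod.castHom (dvd_refl p) (𝓞 K ⧸ P)).injective
      rw [map_zero, ZMod.castHom_apply, ← hqs]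
  · rintro ⟨hpm, hsq⟩
    refine splits_of_stabilizer K hp P hP hover fun σ hσ => ?_
    -- an element whose residue lies in the prime field is fixed modulo `P` by the
    -- decomposition group
    have hfix : ∀ x : 𝓞 K, q x ^ p = q x → σ • x - x ∈ P := by
      intro x hx
      obtain ⟨a, ha⟩ : q x ∈ (ZMod.castHom (dvd_refl p) (𝓞 K ⧸ P)).fieldRange :=
        (bot_le : (⊥ : Subfield (𝓞 K ⧸ P)) ≤ _) ((Subfield.mem_bot_iff_pow_eq_self _ p).2 hx)
      obtain ⟨n, rfl⟩ := ZMod.natCast_zmod_surjective a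
      have h1 : x - n ∈ P := by
        rw [← Ideal.Quotient.eq_zero_iff_mem, map_sub, ← hq, ← ha]; simp
      have h2 := Ideal.smul_mem_pointwise_smul σ _ _ h1
      rw [hσ, smul_sub, show σ • (n : 𝓞 K) = n from
            map_natCast (MulSemiringAction.toRingHom _ _ σ) n] at h2
      simpa using sub_mem h2 h1
    apply hgen
    · refine eq_of_pow_eq_one P (m := m) (by rw [hnat]; exact hcop hpm) ?_ hζ.pow_eq_one (hfix ζ ?_)
      · rw [← smul_pow', hζ.pow_eq_one, smul_one]
      · obtain ⟨k, hk⟩ := (Nat.modEq_iff_dvd' hp.one_lt.le).1 hpm.symm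
        rw [show p = m * k + 1 by have := hp.one_lt; omega, pow_succ, ← map_pow, pow_mul,
          hζ.pow_eq_one, one_pow, map_one, one_mul]
    · have h1 : σ • s - s ∈ P := by
        apply hfix
        obtain ⟨c, hc⟩ := hsq
        have hc' : (q s - c.cast) * (q s + c.cast) = 0 := by
          have := congrArg (ZMod.castHom (dvd_refl p) (𝓞 K ⧸ P)) hc
          rw [map_mul] at this
          simp only [ZMod.castHom_apply] at this
          linear_combination hqs + this
        have hcp : (c.cast : 𝓞 K ⧸ P) ^ p = c.cast := by
          have := congrArg (ZMod.castHom (dvd_refl p) (𝓞 K ⧸ P)) (ZMod.pow_card c)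
          rwa [map_pow] at this
        rcases mul_eq_zero.1 hc' with h | h
        · rw [sub_eq_zero.1 h, hcp]
        · rw [eq_neg_of_add_eq_zero_left h, hodd.neg_pow, hcp]
      have h2 : (σ • s - s) * (σ • s + s) = 0 := by
        have : σ • (s ^ 2) = s ^ 2 := by
          rw [hs]; exact map_intCast (MulSemiringAction.toRingHom _ _ σ) N
        rw [smul_pow'] at this
        linear_combination this
      rcases mul_eq_zero.1 h2 with h | h
      · exact sub_eq_zero.1 h
        -- `σ s = -s ≡ s` would put `2 s`, hence `4 N`, into `P`
      · exfalso
        rw [eq_neg_of_add_eq_zero_left h] at h1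
        have h4 : ((4 * N : ℤ) : 𝓞 K) ∈ P := by
          push_cast
          rw [← hs]
          convert P.mul_mem_left (-2 * s) h1 using 1
          ring
        rw [hint] at h4
        rcases (Nat.prime_iff_prime_int.1 hp).dvd_or_dvd h4 with h | h
        · have h' : p ∣ 2 ^ 2 := by exact_mod_cast h
          have := (Nat.prime_dvd_prime_iff_eq hp Nat.prime_two).1 (hp.dvd_of_dvd_pow h')
          subst this
          exact absurd hodd (by decide)
        · exact hN h

lemma ratRed_ne_zero {g : ℚ} {p : ℕ} (hp : p.Prime) (hg : OrdZero g p) : ratRed g p ≠ 0 := by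
  have := Fact.mk hp
  rw [ratRed]
  refine mul_ne_zero ?_ (inv_ne_zero ?_)
  · rw [Ne, ZMod.intCast_zmod_eq_zero_iff_dvd]; exact hg.1
  · rw [Ne, ZMod.natCast_eq_zero_iff]; exact hg.2

open NumberField in
/-- An odd `p` prime to `g₀` splits completely in `ℚ(ζ_m, √g₀)` iff `p ≡ 1 (mod m)` and `g₀` is
a square mod `p`. This also holds when `ℚ(√g₀) ⊆ ℚ(ζ_m)` or when `p ∣ m`. To work with
integers, `√g₀` is multiplied by the denominator of `g₀`. -/
lemma splits_cycQuad_iff {g₀ : ℚ} {m p : ℕ} (hm : 0 < m) (hp : p.Prime) (hodd : Odd p)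
    (hg : OrdZero g₀ p) :
    SplitsCompletely (cycQuadField g₀ m) p ↔ p ≡ 1 [MOD m] ∧ IsSquare (ratRed g₀ p) := by
  have := Fact.mk hp
  set f : ℚ[X] := (X ^ m - 1) * (X ^ 2 - C g₀) with hf
  have hgal : IsGalois ℚ f.SplittingField := by
    have : Normal ℚ f.SplittingField := SplittingField.instNormal f
    exact ⟨⟩
  have h1 : (X ^ m - 1 : ℚ[X]) ≠ 0 := by simpa using X_pow_sub_C_ne_zero hm (1 : ℚ)
  have h2 : (X ^ 2 - C g₀ : ℚ[X]) ≠ 0 := X_pow_sub_C_ne_zero two_pos _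
  have hspl := SplittingField.splits f
  have hmap0 : f.map (algebraMap ℚ f.SplittingField) ≠ 0 :=
    Polynomial.map_ne_zero (mul_ne_zero h1 h2)
  obtain ⟨z, hz⟩ : ∃ z : f.SplittingField, IsPrimitiveRoot z m := by
    have hdvd : (cyclotomic m ℚ).map (algebraMap ℚ f.SplittingField) ∣
        f.map (algebraMap ℚ f.SplittingField) :=
      Polynomial.map_dvd _ ((cyclotomic.dvd_X_pow_sub_one m ℚ).trans (dvd_mul_right _ _))
    have hs := hspl.of_dvd hmap0 hdvd
    rw [map_cyclotomic] at hs
    obtain ⟨z, hz⟩ := hs.exists_eval_eq_zero (by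
      rw [degree_cyclotomic]; exact_mod_cast (Nat.totient_pos.2 hm).ne')
    have : NeZero (m : f.SplittingField) := ⟨by exact_mod_cast hm.ne'⟩
    exact ⟨z, isRoot_cyclotomic_iff.1 hz⟩
  obtain ⟨w, hw⟩ : ∃ w : f.SplittingField, w ^ 2 = algebraMap ℚ _ g₀ := by
    have hdvd : (X ^ 2 - C g₀).map (algebraMap ℚ f.SplittingField) ∣
        f.map (algebraMap ℚ f.SplittingField) :=
      Polynomial.map_dvd _ (dvd_mul_left _ _)
    have hs := hspl.of_dvd hmap0 hdvd
    obtain ⟨w, hw⟩ := hs.exists_eval_eq_zero (by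
      rw [degree_map, degree_X_pow_sub_C two_pos]; decide)
    exact ⟨w, by simpa [sub_eq_zero] using hw⟩
  have hd0 : (g₀.den : f.SplittingField) ≠ 0 := by exact_mod_cast g₀.den_ne_zero
  have hs2 : ((g₀.den : f.SplittingField) * w) ^ 2 =
      ((g₀.num * g₀.den : ℤ) : f.SplittingField) := by
    have h3 : algebraMap ℚ f.SplittingField g₀ * g₀.den = g₀.num := by
      have := congrArg (algebraMap ℚ f.SplittingField) (Rat.mul_den_eq_num g₀)
      rwa [map_mul, map_natCast, map_intCast] at this
    rw [mul_pow, hw]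
    push_cast
    linear_combination (g₀.den : f.SplittingField) * h3
  have hsint : IsIntegral ℤ ((g₀.den : f.SplittingField) * w) := by
    refine IsIntegral.of_pow two_pos ?_
    rw [hs2]
    exact isIntegral_algebraMap (R := ℤ) (x := g₀.num * g₀.den)
  have hzint : IsIntegral ℤ z := hz.isIntegral hm
  rw [splits_iff_core (f.SplittingField) hp hodd hm (N := g₀.num * g₀.den) (ζ := ⟨z, hzint⟩)
    (s := ⟨_, hsint⟩)]
  · refine and_congr_right fun _ => ?_
    have hd : (g₀.den : ZMod p) ≠ 0 := by
      rw [Ne, ZMod.natCast_eq_zero_iff]; exact hg.2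
    rw [ratRed]
    constructor
    · rintro ⟨c, hc⟩
      refine ⟨c * (g₀.den : ZMod p)⁻¹, ?_⟩
      push_cast at hc
      field_simp
      linear_combination hc
    · rintro ⟨c, hc⟩
      refine ⟨c * (g₀.den : ZMod p), ?_⟩
      push_cast
      field_simp at hc
      linear_combination (g₀.den : ZMod p) * hc
  · intro h
    rcases (Nat.prime_iff_prime_int.1 hp).dvd_or_dvd h with h | h
    · exact hg.1 h
    · exact hg.2 (by exact_mod_cast h)
  · exact IsPrimitiveRoot.coe_submonoidClass_iff.1 hz
  · ext; exact hs2
  · intro σ h3 h4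
    have h3' : σ z = z := congrArg (algebraMap (𝓞 f.SplittingField) _) h3
    have h4' : σ ((g₀.den : f.SplittingField) * w) = (g₀.den : f.SplittingField) * w :=
      congrArg (algebraMap (𝓞 f.SplittingField) _) h4
    have hσw : σ w = w := by
      rw [map_mul, map_natCast] at h4'
      exact mul_left_cancel₀ hd0 h4'
    refine Polynomial.Gal.ext f fun x hx => ?_
    -- `σ` is determined by its action on the roots of `f`, which are powers of `z` and `± w`
    have hx' : aeval x ((X ^ m - 1) * (X ^ 2 - C g₀) : ℚ[X]) = 0 := (mem_rootSet.1 hx).2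
    simp only [map_mul, map_sub, map_pow, aeval_X, map_one, aeval_C, mul_eq_zero, sub_eq_zero] at hx'
    rcases hx' with h | h
    · have : NeZero m := ⟨hm.ne'⟩
      obtain ⟨i, -, rfl⟩ := hz.eq_pow_of_pow_eq_one h
      change σ _ = _
      rw [map_pow, h3']; rfl
    · change σ x = x
      rw [← hw] at h
      rcases sq_eq_sq_iff_eq_or_eq_neg.1 h with rfl | rfl
      · exact hσw
      · rw [map_neg, hσw]

/-! ### Character sums and power residues -/

/-- Orthogonality: summing `ψ_d` over `d ∣ n` sums over all characters killed by `n`, which detects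
`n`-th powers mod `p` by `g ^ ((p - 1) / n) = 1`. -/
lemma sum_psi {p : ℕ} (hp : p.Prime) {g : ℚ} (hg : ratRed g p ≠ 0) {n : ℕ} (hn : n ∣ p - 1) :
    ∑ d ∈ n.divisors, psiSum g p d = if ratRed g p ^ ((p - 1) / n) = 1 then (n : ℂ) else 0 := by
  have := Fact.mk hp
  have hp1 : 0 < p - 1 := by have := hp.one_lt; omega
  have hn0 : n ≠ 0 := by rintro rfl; simp at hn; omega
  set a := ratRed g p with ha
  have : Finite (MulChar (ZMod p) ℂ) := inferInstance
  let := Fintype.ofFinite (MulChar (ZMod p) ℂ)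
  have h1 : ∑ d ∈ n.divisors, psiSum g p d =
      ∑ χ ∈ (Finset.univ : Finset (MulChar (ZMod p) ℂ)).filter (fun χ => χ ^ n = 1), χ a := by
    have h2 : ∀ d, psiSum g p d =
        ∑ χ ∈ (Finset.univ : Finset (MulChar (ZMod p) ℂ)).filter (fun χ => orderOf χ = d), χ a := by
      intro d
      rw [psiSum]
      exact finsum_mem_eq_sum_of_inter_support_eq _ (by ext; simp)
    simp only [h2]
    rw [← Finset.sum_fiberwise_of_maps_to (t := n.divisors)
      (g := fun χ : MulChar (ZMod p) ℂ => orderOf χ)]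
    · refine Finset.sum_congr rfl fun d hd => Finset.sum_congr ?_ fun _ _ => rfl
      ext χ
      simp only [Finset.mem_filter, Finset.mem_univ, true_and]
      refine ⟨fun h => ⟨?_, h⟩, fun h => h.2⟩
      rw [← orderOf_dvd_iff_pow_eq_one, h]
      exact Nat.dvd_of_mem_divisors hd
    · intro χ hχ
      rw [Nat.mem_divisors, orderOf_dvd_iff_pow_eq_one]
      exact ⟨(Finset.mem_filter.1 hχ).2, hn0⟩
  -- the character group is cyclic of order `p - 1`, so these characters are the powers of `Z`
  have hcard : Nat.card (MulChar (ZMod p) ℂ) = p - 1 := by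
    rw [MulChar.card_eq_card_units_of_hasEnoughRootsOfUnity, Nat.card_eq_fintype_card,
      ZMod.card_units]
  obtain ⟨e⟩ := MulChar.mulEquiv_units (ZMod p) ℂ
  have hcyc : IsCyclic (MulChar (ZMod p) ℂ) := isCyclic_of_surjective e.symm e.symm.surjective
  obtain ⟨Y, hY⟩ := hcyc.exists_generator
  have hYo : orderOf Y = p - 1 := by rw [orderOf_eq_card_of_forall_mem_zpowers hY, hcard]
  set Z := Y ^ ((p - 1) / n) with hZ
  have hZo : orderOf Z = n := by
    rw [hZ, orderOf_pow_of_dvd (Nat.div_pos (Nat.le_of_dvd hp1 hn) (Nat.pos_of_ne_zero hn0)).ne'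
      (by rw [hYo]; exact Nat.div_dvd_of_dvd hn), hYo, Nat.div_div_self hn hp1.ne']
  have hset : (Finset.univ : Finset (MulChar (ZMod p) ℂ)).filter (fun χ => χ ^ n = 1) =
      (Finset.range n).image (fun i => Z ^ i) := by
    symm
    apply Finset.eq_of_subset_of_card_le
    · intro χ hχ
      obtain ⟨i, -, rfl⟩ := Finset.mem_image.1 hχ
      rw [Finset.mem_filter]
      exact ⟨Finset.mem_univ _, by rw [← pow_mul, mul_comm, pow_mul, ← hZo, pow_orderOf_eq_one,
        one_pow]⟩
    · rw [Finset.card_image_of_injOn, Finset.card_range]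
      · exact IsCyclic.card_pow_eq_one_le (Nat.pos_of_ne_zero hn0)
      · intro i hi j hj hij
        exact pow_injOn_Iio_orderOf (by simpa [hZo] using hi) (by simpa [hZo] using hj) hij
  have hsum : ∑ χ ∈ (Finset.univ : Finset (MulChar (ZMod p) ℂ)).filter (fun χ => χ ^ n = 1), χ a =
      ∑ i ∈ Finset.range n, (Z a) ^ i := by
    rw [hset, Finset.sum_image]
    · refine Finset.sum_congr rfl fun i _ => ?_
      exact MulChar.pow_apply_coe Z i (Units.mk0 a hg)
    · intro i hi j hj hij
      exact pow_injOn_Iio_orderOf (by simpa [hZo] using hi) (by simpa [hZo] using hj) hij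
  -- a generator of the character group separates points
  have hinj : ∀ b : ZMod p, Y b = 1 → b ≠ 0 → b = 1 := by
    intro b hb hb0
    by_contra hne
    obtain ⟨χ, hχ⟩ := MulChar.exists_apply_ne_one_of_hasEnoughRootsOfUnity (ZMod p) ℂ hne
    obtain ⟨k, rfl⟩ := mem_powers_iff_mem_zpowers.2 (hY χ)
    apply hχ
    have := MulChar.pow_apply_coe Y k (Units.mk0 b hb0)
    rw [Units.val_mk0, hb, one_pow] at this
    exact this
  have hZa : Z a = 1 ↔ a ^ ((p - 1) / n) = 1 := by
    have h3 : Z a = Y (a ^ ((p - 1) / n)) := by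
      rw [map_pow]
      exact MulChar.pow_apply_coe Y _ (Units.mk0 a hg)
    rw [h3]
    exact ⟨fun h => hinj _ h (pow_ne_zero _ hg), fun h => by rw [h, map_one]⟩
  rw [h1, hsum]
  split_ifs with h
  · simp [hZa.2 h]
  · have hZn : (Z a) ^ n = 1 := by
      have h4 := MulChar.pow_apply_coe Z n (Units.mk0 a hg)
      have h5 : Z ^ n = 1 := by rw [← hZo, pow_orderOf_eq_one]
      rw [h5, MulChar.one_apply_coe] at h4
      exact h4.symm
    rw [geom_sum_eq (fun h' => h (hZa.1 h')), hZn]; simp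

/-- `M_{g,t}(x)` is `n / t` times the number of `p` for which `g` is an `n`-th power mod `p`, where
`n = gcd(2h, t)`: the divisors of `gcd(h, t)` are those divisors of `n` that divide `h`. -/
lemma mgt_eq_sum (g : ℚ) {h t : ℕ} (ht : 1 ≤ t) (x : ℝ) :
    Mgt g h t x = (Nat.gcd (2 * h) t : ℂ) / t * ∑ p ∈ primesTo g t x,
      if ratRed g p ^ ((p - 1) / Nat.gcd (2 * h) t) = 1 then 1 else 0 := by
  have hdisj : ∀ F : ℕ → ℂ, ∑ d ∈ (Nat.gcd h t).divisors, F d +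
      ∑ d ∈ (Nat.gcd (2 * h) t).divisors.filter (fun d => ¬ d ∣ h), F d =
        ∑ d ∈ (Nat.gcd (2 * h) t).divisors, F d := by
    intro F
    rw [← Finset.sum_filter_add_sum_filter_not (Nat.gcd (2 * h) t).divisors (fun d => d ∣ h)]
    congr 2
    ext d
    have h1 : Nat.gcd h t ≠ 0 := Nat.gcd_ne_zero_right (by omega)
    have h2 : Nat.gcd (2 * h) t ≠ 0 := Nat.gcd_ne_zero_right (by omega)
    simp only [Finset.mem_filter, Nat.mem_divisors, Nat.dvd_gcd_iff]
    exact ⟨fun H => ⟨⟨⟨H.1.1.mul_left 2, H.1.2⟩, h2⟩, H.1.1⟩, fun H => ⟨⟨H.2, H.1.1.2⟩, h1⟩⟩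
  rw [Mgt, Lgt, Qgt, ← mul_add, ← Finset.sum_add_distrib, Finset.mul_sum, Finset.mul_sum]
  refine Finset.sum_congr rfl fun p hp => ?_
  obtain ⟨-, hp, hodd, hg, hmod⟩ := Finset.mem_filter.1 hp
  have hdvd : Nat.gcd (2 * h) t ∣ p - 1 :=
    (Nat.gcd_dvd_right _ _).trans ((Nat.modEq_iff_dvd' hp.one_lt.le).1 hmod.symm)
  rw [hdisj, sum_psi hp (ratRed_ne_zero hp hg) hdvd]
  split_ifs <;> ring

/-- Rewrites a prime count as a sum over the index set `primesTo g t x` common to all terms of the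
formula. -/
lemma countPrimes_eq_sum (g : ℚ) (t : ℕ) (x : ℝ) (P R : ℕ → Prop)
    (hPR : ∀ p, p.Prime → Odd p → OrdZero g p → (P p ↔ p ≡ 1 [MOD t] ∧ R p)) :
    (countPrimes x (fun p => Odd p ∧ OrdZero g p ∧ P p) : ℂ) =
      ∑ p ∈ primesTo g t x, if R p then 1 else 0 := by
  rw [Finset.sum_boole, countPrimes, primesTo, Finset.filter_filter]
  congr 2
  ext p
  simp only [Finset.mem_filter]
  refine and_congr_right fun _ => ?_
  constructor
  · rintro ⟨h1, h2, h3, h4⟩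
    have := (hPR p h1 h2 h3).1 h4
    exact ⟨⟨h1, h2, h3, this.1⟩, this.2⟩
  · rintro ⟨⟨h1, h2, h3, h4⟩, h5⟩
    exact ⟨h1, h2, h3, (hPR p h1 h2 h3).2 ⟨h4, h5⟩⟩

/-- The 2-adic case distinction: for `t = k t₁`, `h = k h₁` with `k = gcd(t, h)`, either `τ ≤ e`,
`t₁` is odd and `gcd(2h, t) = k`, or `τ > e`, `h₁` is odd and `gcd(2h, t) = 2k`. -/
lemma gcd_cases {h t : ℕ} (hh : 1 ≤ h) (ht : 1 ≤ t) :
    ∃ k t₁ h₁ : ℕ, 0 < k ∧ 0 < t₁ ∧ t = k * t₁ ∧ h = k * h₁ ∧ t / Nat.gcd t h = t₁ ∧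
      ((padicValNat 2 t ≤ padicValNat 2 h ∧ Odd t₁ ∧ Nat.gcd (2 * h) t = k) ∨
       (padicValNat 2 h < padicValNat 2 t ∧ Odd h₁ ∧ Nat.gcd (2 * h) t = 2 * k ∧
          ∃ t₂, t₁ = 2 * t₂ ∧ (Odd t₂ ↔ padicValNat 2 t = padicValNat 2 h + 1))) := by
  have hk : 0 < Nat.gcd t h := Nat.gcd_pos_of_pos_left _ ht
  obtain ⟨t₁, h₁, hcop, h1, h2⟩ := Nat.exists_coprime t h
  set k := Nat.gcd t h
  have ht1 : 0 < t₁ := Nat.pos_of_ne_zero (by rintro rfl; omega)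
  have hh1 : 0 < h₁ := Nat.pos_of_ne_zero (by rintro rfl; omega)
  have hvt : padicValNat 2 t = padicValNat 2 k + padicValNat 2 t₁ := by
    rw [h1, padicValNat.mul ht1.ne' hk.ne', add_comm]
  have hvh : padicValNat 2 h = padicValNat 2 k + padicValNat 2 h₁ := by
    rw [h2, padicValNat.mul hh1.ne' hk.ne', add_comm]
  have hg : Nat.gcd (2 * h) t = k * Nat.gcd 2 t₁ := by
    have : Nat.gcd (2 * h) t = Nat.gcd (k * (2 * h₁)) (k * t₁) := by
      rw [show k * (2 * h₁) = 2 * h by rw [h2]; ring, show k * t₁ = t by rw [h1]; ring]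
    rw [this, Nat.gcd_mul_left, Nat.Coprime.gcd_mul_right_cancel 2 hcop.symm]
  have hval : ∀ n : ℕ, 0 < n → (Odd n ↔ padicValNat 2 n = 0) := by
    intro n hn
    rw [padicValNat.eq_zero_iff, ← Nat.not_even_iff_odd, even_iff_two_dvd]
    omega
  refine ⟨k, t₁, h₁, hk, ht1, by rw [mul_comm]; exact h1, by rw [mul_comm]; exact h2,
    Nat.div_eq_of_eq_mul_left hk h1, ?_⟩
  rcases Nat.even_or_odd t₁ with he | ho
  · right
    have hh1o : Odd h₁ := by
      rw [← Nat.not_even_iff_odd]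
      intro hh'
      have := Nat.dvd_gcd he.two_dvd hh'.two_dvd
      rw [hcop] at this
      omega
    obtain ⟨t₂, rfl⟩ := he.two_dvd
    have hv2 : padicValNat 2 (2 * t₂) = 1 + padicValNat 2 t₂ := by
      rw [padicValNat.mul two_ne_zero (by omega), padicValNat_self]
    have := (hval h₁ hh1).1 hh1o
    refine ⟨by omega, hh1o, ?_, t₂, rfl, ?_⟩
    · rw [hg, Nat.gcd_mul_right_right, mul_comm]
    · rw [hval t₂ (by omega)]; omega
  · left
    have := (hval t₁ ht1).1 ho
    refine ⟨by omega, ho, ?_⟩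
    rw [hg, Nat.coprime_two_left.2 ho, mul_one]

/-! ### The power residue condition -/

lemma OrdZero.of_decomp {g g₀ : ℚ} {h p : ℕ} (hd : Decomp g g₀ h) (hg : OrdZero g p) :
    OrdZero g₀ p := by
  have hh : h ≠ 0 := by have := hd.h_pos; omega
  have key : OrdZero (g₀ ^ h) p := by
    rcases hd.eq with rfl | rfl
    · exact hg
    · simpa [OrdZero] using hg
  rw [OrdZero, Rat.num_pow, Rat.den_pow] at key
  exact ⟨fun H => key.1 (dvd_pow H hh), fun H => key.2 (dvd_pow H hh)⟩

lemma ratRed_pow (g : ℚ) {p : ℕ} (hp : p.Prime) (h : ℕ) :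
    ratRed (g ^ h) p = ratRed g p ^ h := by
  have := Fact.mk hp
  simp [ratRed, Rat.num_pow, Rat.den_pow, mul_pow]

lemma ratRed_neg (g : ℚ) (p : ℕ) : ratRed (-g) p = -ratRed g p := by
  simp [ratRed]

lemma pow_index_of_dvd {p n h : ℕ} (hp : p.Prime) {a : ZMod p} (ha : a ≠ 0) (hn : n ∣ p - 1)
    (hnh : n ∣ h) : (a ^ h) ^ ((p - 1) / n) = 1 := by
  have := Fact.mk hp
  obtain ⟨j, rfl⟩ := hnh
  rw [← pow_mul, mul_right_comm, Nat.mul_div_cancel' hn, pow_mul, ZMod.pow_card_sub_one_eq_one ha,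
    one_pow]

/-- When `2h / n` is odd, `n = 2k`, the power residue symbol of `a ^ h` is the quadratic
symbol of `a`. -/
lemma pow_index_of_odd {p k h₁ : ℕ} (hp : p.Prime) (hodd : Odd p) {a : ZMod p} (ha : a ≠ 0)
    (hk : 2 * k ∣ p - 1) (hh : Odd h₁) :
    (a ^ (k * h₁)) ^ ((p - 1) / (2 * k)) = a ^ (p / 2) := by
  have := Fact.mk hp
  obtain ⟨c, hc⟩ := hk
  have hp1 := hp.one_lt
  have hk0 : 0 < k := Nat.pos_of_ne_zero (by rintro rfl; omega)
  have h2 : p / 2 = k * c := by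
    have := Nat.two_mul_div_two_add_one_of_odd hodd
    rw [mul_assoc] at hc
    omega
  rw [hc, Nat.mul_div_cancel_left _ (by omega), ← pow_mul,
    show k * h₁ * c = k * c * h₁ by ring, pow_mul, ← h2]
  rcases ZMod.pow_div_two_eq_neg_one_or_one p ha with h | h
  · rw [h, one_pow]
  · rw [h, hh.neg_one_pow]

/-- Euler's criterion with a sign. -/
lemma neg_one_pow_mul_eq_one_iff {p m : ℕ} (hp : p.Prime) (hodd : Odd p) {a : ZMod p}
    (ha : a ≠ 0) : (-1) ^ m * a ^ (p / 2) = 1 ↔ (Even m ↔ IsSquare a) := by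
  have := Fact.mk hp
  have h2 : Fact (2 < p) := ⟨by
    rcases hodd with ⟨k, rfl⟩; have := hp.one_lt; omega⟩
  have hne := ZMod.neg_one_ne_one (n := p)
  rw [ZMod.euler_criterion p ha]
  rcases ZMod.pow_div_two_eq_neg_one_or_one p ha with h | h <;>
  rcases Nat.even_or_odd m with hm | hm <;>
  simp [h, hm, hne, hm.neg_one_pow, Nat.not_even_iff_odd]

/-! ### The counting functions as sums over a common set of primes -/

lemma piCount_eq_sum (g : ℚ) {t m : ℕ} (htm : t ∣ m) (x : ℝ) :
    (piCount g m x : ℂ) = ∑ p ∈ primesTo g t x, if p ≡ 1 [MOD m] then 1 else 0 := by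
  have := countPrimes_eq_sum g t x (fun p => p ≡ 1 [MOD m]) (fun p => p ≡ 1 [MOD m])
    fun p _ _ _ => ⟨fun H => ⟨H.of_dvd htm, H⟩, fun H => H.2⟩
  rw [piCount, this]
  exact Finset.sum_congr rfl fun p _ => by congr

lemma PKg_eq_sum {g g₀ : ℚ} {h t m : ℕ} (hd : Decomp g g₀ h) (hm : 0 < m) (htm : t ∣ m)
    (x : ℝ) : (PKg g (cycQuadField g₀ m) x : ℂ) =
      ∑ p ∈ primesTo g t x, if p ≡ 1 [MOD m] ∧ IsSquare (ratRed g₀ p) then 1 else 0 := by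
  have := countPrimes_eq_sum g t x (fun p => SplitsCompletely (cycQuadField g₀ m) p)
    (fun p => p ≡ 1 [MOD m] ∧ IsSquare (ratRed g₀ p)) fun p hp hodd hg => by
      rw [splits_cycQuad_iff hm hp hodd (OrdZero.of_decomp hd hg)]
      exact ⟨fun H => ⟨H.1.of_dvd htm, H⟩, fun H => H.2⟩
  rw [PKg, this]
  exact Finset.sum_congr rfl fun p _ => by congr

/-- The condition `(-1)^((p-1)/n) = 1` in terms of the congruence class of `p` modulo `2 t`. -/
lemma even_index_iff {p n t s : ℕ} (hp : p.Prime) (hn : 0 < n) (hs : t = n * s)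
    (ht : p ≡ 1 [MOD t]) (hodd : Odd s) : Even ((p - 1) / n) ↔ p ≡ 1 [MOD 2 * t] := by
  obtain ⟨c, hc⟩ := (Nat.modEq_iff_dvd' hp.one_lt.le).1 ht.symm
  have ht0 : 0 < t := by rw [hs]; exact Nat.mul_pos hn hodd.pos
  rw [Nat.ModEq.comm, Nat.modEq_iff_dvd' hp.one_lt.le, hc, mul_comm 2 t,
    Nat.mul_dvd_mul_iff_left ht0, hs, mul_assoc, Nat.mul_div_cancel_left _ hn, Nat.even_mul,
    even_iff_two_dvd, even_iff_two_dvd]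
  have : ¬ 2 ∣ s := by rwa [← even_iff_two_dvd, Nat.not_even_iff_odd]
  tauto

lemma index_even {p n t s : ℕ} (hp : p.Prime) (hn : 0 < n) (hs : t = n * s)
    (ht : p ≡ 1 [MOD t]) (heven : Even s) : Even ((p - 1) / n) := by
  obtain ⟨c, hc⟩ := (Nat.modEq_iff_dvd' hp.one_lt.le).1 ht.symm
  rw [hc, hs, mul_assoc, Nat.mul_div_cancel_left _ hn]
  exact heven.mul_right c

/-! ### The evaluation -/

/-- the evaluation of `M_{g,t}(x) = L_{g,t}(x) + Q_{g,t}(x)` in terms of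
prime counting functions. -/
theorem stmt6 (g g₀ : ℚ) (h t : ℕ) (hd : Decomp g g₀ h) (ht : 1 ≤ t) (x : ℝ) :
    (0 < g →
      ((padicValNat 2 t ≤ padicValNat 2 h →
          Mgt g h t x = (piCount g t x : ℂ) / ((t / Nat.gcd t h : ℕ) : ℂ)) ∧
       (padicValNat 2 h < padicValNat 2 t →
          Mgt g h t x =
            2 * (PKg g (cycQuadField g₀ t) x : ℂ) / ((t / Nat.gcd t h : ℕ) : ℂ)))) ∧
    (g < 0 →
      ((padicValNat 2 t ≤ padicValNat 2 h →
          Mgt g h t x = (piCount g (2 * t) x : ℂ) / ((t / Nat.gcd t h : ℕ) : ℂ)) ∧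
       (padicValNat 2 t = padicValNat 2 h + 1 →
          Mgt g h t x =
            (4 * (PKg g (cycQuadField g₀ (2 * t)) x : ℂ) -
              2 * (PKg g (cycQuadField g₀ t) x : ℂ) +
              2 * ((piCount g t x : ℂ) - (piCount g (2 * t) x : ℂ))) /
              ((t / Nat.gcd t h : ℕ) : ℂ)) ∧
       (padicValNat 2 h + 1 < padicValNat 2 t →
          Mgt g h t x =
            2 * (PKg g (cycQuadField g₀ t) x : ℂ) / ((t / Nat.gcd t h : ℕ) : ℂ)))) := by
  obtain ⟨k, t₁, h₁, hk, ht₁, hkt, hkh, hth, hcases⟩ := gcd_cases hd.h_pos ht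
  have hk0 : (k : ℂ) ≠ 0 := by exact_mod_cast hk.ne'
  have ht0 : (t₁ : ℂ) ≠ 0 := by exact_mod_cast ht₁.ne'
  have htc : (t : ℂ) = k * t₁ := by rw [hkt]; push_cast; rfl
  have hpow : 0 < g₀ ^ h := pow_pos hd.g₀_pos h
  rw [mgt_eq_sum g ht x, hth, piCount_eq_sum g (dvd_refl t) x,
    piCount_eq_sum g (Dvd.intro_left 2 rfl) x, PKg_eq_sum hd ht dvd_rfl x,
    PKg_eq_sum hd (by omega) (Dvd.intro_left 2 rfl) x]
  constructor
  · intro hpos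
    have hg : g = g₀ ^ h := hd.eq.resolve_right (by intro H; linarith)
    constructor
    · intro hτ
      obtain ⟨-, ho, hn⟩ := hcases.resolve_right fun H => absurd H.1 hτ.not_gt
      rw [hn, htc, show (k : ℂ) / (k * t₁) = 1 / t₁ by field_simp, div_mul_eq_mul_div, one_mul]
      congr 1
      refine Finset.sum_congr rfl fun p hp => ?_
      obtain ⟨-, hp, hodd, hgp, hmod⟩ := Finset.mem_filter.1 hp
      have ha := ratRed_ne_zero hp (OrdZero.of_decomp hd hgp)
      have hr := (Nat.modEq_iff_dvd' hp.one_lt.le).1 hmod.symm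
      rw [hg, ratRed_pow _ hp, pow_index_of_dvd hp ha ((Dvd.intro _ hkt.symm).trans hr)
        (Dvd.intro _ hkh.symm)]
      simp [hmod]
    · intro hτ
      obtain ⟨-, ho, hn, t₂, rfl, -⟩ := hcases.resolve_left fun H => absurd hτ H.1.not_gt
      rw [hn, htc, show ((2 * k : ℕ) : ℂ) / (k * (2 * t₂ : ℕ)) = 2 / (2 * t₂ : ℕ) by
        push_cast at ht0 ⊢; field_simp, div_mul_eq_mul_div]
      congr 2
      refine Finset.sum_congr rfl fun p hp => ?_
      obtain ⟨-, hp, hodd, hgp, hmod⟩ := Finset.mem_filter.1 hp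
      have := Fact.mk hp
      have ha := ratRed_ne_zero hp (OrdZero.of_decomp hd hgp)
      have hr := (Nat.modEq_iff_dvd' hp.one_lt.le).1 hmod.symm
      have h2k : 2 * k ∣ p - 1 := (Dvd.intro t₂ (by rw [hkt]; ring)).trans hr
      rw [hg, ratRed_pow _ hp, hkh, pow_index_of_odd hp hodd ha h2k ho]
      simp only [← ZMod.euler_criterion p ha, hmod, true_and]
  · intro hneg
    have hg : g = -(g₀ ^ h) := hd.eq.resolve_left (by intro H; linarith)
    refine ⟨fun hτ => ?_, ?_⟩
    · obtain ⟨-, ho, hn⟩ := hcases.resolve_right fun H => absurd H.1 hτ.not_gt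
      rw [hn, htc, show (k : ℂ) / (k * t₁) = 1 / t₁ by field_simp, div_mul_eq_mul_div, one_mul]
      congr 1
      refine Finset.sum_congr rfl fun p hp => ?_
      obtain ⟨-, hp, hodd, hgp, hmod⟩ := Finset.mem_filter.1 hp
      have hp2 : Fact (2 < p) := ⟨by
        rcases hodd with ⟨j, rfl⟩; have := hp.one_lt; omega⟩
      have ha := ratRed_ne_zero hp (OrdZero.of_decomp hd hgp)
      have hr := (Nat.modEq_iff_dvd' hp.one_lt.le).1 hmod.symm
      have hiff : ratRed g p ^ ((p - 1) / k) = 1 ↔ p ≡ 1 [MOD 2 * t] := by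
        rw [hg, ratRed_neg, ratRed_pow _ hp, neg_pow,
          pow_index_of_dvd hp ha ((Dvd.intro _ hkt.symm).trans hr) (Dvd.intro _ hkh.symm),
          mul_one, neg_one_pow_eq_one_iff_even ZMod.neg_one_ne_one,
          even_index_iff hp hk hkt hmod ho]
      simp only [hiff]
    · -- for `τ > e` the sign contributes `(-1)^((p-1)/n)` to the quadratic symbol of `g₀`
      have hiff : padicValNat 2 h < padicValNat 2 t → ∀ p ∈ primesTo g t x,
          (ratRed g p ^ ((p - 1) / Nat.gcd (2 * h) t) = 1 ↔
            (Even ((p - 1) / Nat.gcd (2 * h) t) ↔ IsSquare (ratRed g₀ p))) := by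
        intro hτ p hp
        obtain ⟨-, ho, hn, t₂, rfl, -⟩ := hcases.resolve_left fun H => absurd hτ H.1.not_gt
        obtain ⟨-, hp, hodd, hgp, hmod⟩ := Finset.mem_filter.1 hp
        have ha := ratRed_ne_zero hp (OrdZero.of_decomp hd hgp)
        have hr := (Nat.modEq_iff_dvd' hp.one_lt.le).1 hmod.symm
        have h2k : 2 * k ∣ p - 1 := (Dvd.intro t₂ (by rw [hkt]; ring)).trans hr
        rw [hn, hg, ratRed_neg, ratRed_pow _ hp, neg_pow, ← neg_one_pow_mul_eq_one_iff hp hodd ha]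
        nth_rewrite 1 [hkh]
        rw [pow_index_of_odd hp hodd ha h2k ho]
      constructor
      · intro hτ
        obtain ⟨-, ho, hn, t₂, rfl, hpar⟩ := hcases.resolve_left fun H => by omega
        have hcoef : ((2 * k : ℕ) : ℂ) / t = 2 / (2 * t₂ : ℕ) := by
          rw [htc]; push_cast at ht0 ⊢; field_simp
        have hiff' := hiff (by omega)
        rw [hn] at hiff' ⊢
        rw [hcoef, div_mul_eq_mul_div, Finset.mul_sum, Finset.mul_sum, Finset.mul_sum,
          ← Finset.sum_sub_distrib, ← Finset.sum_sub_distrib, Finset.mul_sum,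
          ← Finset.sum_add_distrib]
        congr 1
        refine Finset.sum_congr rfl fun p hp => ?_
        have hi := hiff' p hp
        obtain ⟨-, hp, hodd, hgp, hmod⟩ := Finset.mem_filter.1 hp
        rw [even_index_iff hp (by omega) (by rw [hkt]; ring) hmod (hpar.2 hτ)] at hi
        simp only [hi, hmod, true_and]
        by_cases h1 : p ≡ 1 [MOD 2 * t] <;> by_cases h2 : IsSquare (ratRed g₀ p) <;>
          simp [h1, h2] <;> norm_num
      · intro hτ
        obtain ⟨-, ho, hn, t₂, rfl, hpar⟩ := hcases.resolve_left fun H => by omega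
        have hcoef : ((2 * k : ℕ) : ℂ) / t = 2 / (2 * t₂ : ℕ) := by
          rw [htc]; push_cast at ht0 ⊢; field_simp
        have hiff' := hiff (by omega)
        rw [hn] at hiff' ⊢
        rw [hcoef, div_mul_eq_mul_div]
        congr 2
        refine Finset.sum_congr rfl fun p hp => ?_
        have hi := hiff' p hp
        obtain ⟨-, hp, hodd, hgp, hmod⟩ := Finset.mem_filter.1 hp
        have hev : Even t₂ := by
          rw [← Nat.not_odd_iff_even, hpar]; omega
        have := index_even hp (by omega) (show t = 2 * k * t₂ by rw [hkt]; ring) hmod hev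
        simp only [hi, this, hmod, true_iff, true_and]
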